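/- Let w be an infinite binary word such that for every m with 0 ≤ m ≤ n, every factor of w of length m is balanced. Then for every m with 0 ≤ m ≤ n+1, the set of privileged factors of w of length m equals the set of palindromic factors of w of length m. In particular, every infinite balanced binary word is rich. -/

import Mathlib

/-- Number of occurrences of `u` as a factor of `w` (positions are 0-indexed). -/
noncomputable def occCount {A : Type*} (u w : List A) : ℕ :=
  Set.ncard {i : ℕ | i + u.length ≤ w.length ∧ (w.drop i).take u.length = u}

/-- `v` is a complete first return to `u`: `u` is a prefix and a suffix of `v`,
and `u` has exactly two occurrences in `v`. -/
def IsCompleteFirstReturn {A : Type*} (v u : List A) : Prop :=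
  u <+: v ∧ u <:+ v ∧ occCount u v = 2

/-- Privileged words: the empty word and the single letters are privileged, and a word of
length at least 2 is privileged if it is a complete first return to a shorter privileged word. -/
inductive Privileged {A : Type*} : List A → Prop where
  | nil : Privileged ([] : List A)
  | single (a : A) : Privileged [a]
  | ret (w u : List A) : 2 ≤ w.length → u.length < w.length → Privileged u →
      IsCompleteFirstReturn w u → Privileged w

/-- A complete return word: a complete first return to some word
(the empty word counted by convention; letters are complete first returns to the empty word). -/
def IsCompleteReturnWord {A : Type*} (v : List A) : Prop :=
  v = [] ∨ ∃ u : List A, IsCompleteFirstReturn v u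

/-- Position `i` of `w` (1-based, `1 ≤ i ≤ |w|`) introduces the factor `u`:
`u` occurs in `w` ending at position `i` and `u` occurs exactly once in the prefix `w[1,i]`. -/
def Introduces {A : Type*} (w : List A) (i : ℕ) (u : List A) : Prop :=
  1 ≤ i ∧ i ≤ w.length ∧ u <:+ w.take i ∧ occCount u (w.take i) = 1

/-- A finite word is rich if it has exactly `|w| + 1` distinct palindromic factors. -/
noncomputable def RichWord {A : Type*} (w : List A) : Prop :=
  Set.ncard {u : List A | u <:+: w ∧ u.reverse = u} = w.length + 1

/-- `u` is a (finite) factor of the infinite word `w`. -/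
def IsFactorInf {A : Type*} (w : ℕ → A) (u : List A) : Prop :=
  ∃ i : ℕ, u = (List.range u.length).map fun k => w (i + k)

/-- A Q-property of finite words. -/
structure IsQProperty {A : Type*} (Q : List A → Prop) : Prop where
  q_nil : Q []
  q_single : ∀ a : A, Q [a]
  ends_at_every_position : ∀ (w : List A) (i : ℕ), 1 ≤ i → i ≤ w.length →
    ∃ u : List A, u ≠ [] ∧ u <:+ w.take i ∧ Q u
  introduces_at_most_one : ∀ (w : List A) (i : ℕ) (u v : List A),
    Introduces w i u → Introduces w i v → Q u → Q v → u = v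

/-- Q-complexity of an infinite word: the number of distinct factors of length `n`
having property `Q`. -/
noncomputable def qComplexityInf {A : Type*} (w : ℕ → A) (Q : List A → Prop) (n : ℕ) : ℕ :=
  Set.ncard {u : List A | IsFactorInf w u ∧ Q u ∧ u.length = n}

/-- Privileged complexity of an infinite word. -/
noncomputable def privComplexityInf {A : Type*} (w : ℕ → A) (n : ℕ) : ℕ :=
  Set.ncard {u : List A | IsFactorInf w u ∧ Privileged u ∧ u.length = n}

/-- Palindromic complexity of an infinite word. -/
noncomputable def palComplexityInf {A : Type*} (w : ℕ → A) (n : ℕ) : ℕ :=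
  Set.ncard {u : List A | IsFactorInf w u ∧ u.reverse = u ∧ u.length = n}

/-- An infinite word is ultimately periodic if it is of the form `u v v v ⋯`
with `v` nonempty. -/
def UltimatelyPeriodic {A : Type*} (w : ℕ → A) : Prop :=
  ∃ u v : List A, v ≠ [] ∧ ∀ n : ℕ, w n =
    if n < u.length then u.getD n (w 0)
    else v.getD ((n - u.length) % v.length) (w 0)

/-- An infinite word is Sturmian if it has exactly `n + 1` distinct factors of
length `n` for every `n`. -/
def Sturmian {A : Type*} (w : ℕ → A) : Prop :=
  ∀ n : ℕ, Set.ncard {u : List A | IsFactorInf w u ∧ u.length = n} = n + 1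

/-- A finite binary word is balanced: its set of factors is balanced. -/
def BalancedWord (x : List Bool) : Prop :=
  ∀ u v : List Bool, u <:+: x → v <:+: x → u.length = v.length →
    ((u.count true : ℤ) - (v.count true : ℤ)).natAbs ≤ 1

/-- `u` is a right special factor of the infinite word `w`. -/
def RightSpecial {A : Type*} (w : ℕ → A) (u : List A) : Prop :=
  ∃ a b : A, a ≠ b ∧ IsFactorInf w (u ++ [a]) ∧ IsFactorInf w (u ++ [b])

/-- The Thue-Morse word: the `n`-th letter is the parity of the number of ones in the
binary expansion of `n` (`false` = 0, `true` = 1). -/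
def thueMorse (n : ℕ) : Bool := (Nat.digits 2 n).count 1 % 2 == 1

/-!
A balanced binary word has no two factors `c x c` and `d y d` with `c ≠ d` and `y` a permutation
of `x`. In a word `w` without such pairs, every complete first return to a palindrome `u` is a
palindrome, by induction on `u = c v c`. If `v` is always followed by `c` in `w` and in its
reversal, then stripping the end letters of `w` leaves a complete first return to `v`. Otherwise
`v` is right special. If `w` differed from its reversal, their longest common prefix `r` would be
right special too, and of two right special words one is a suffix of the other, since `e z` and
`f z` with `e ≠ f` cannot both be right special. So `v` is a suffix of `r`, preceded there by `c`
because `c v c` occurs. Hence `r c` ends with `u`, so it is all of `w` or of its reversal; but the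
other one then ends with the other letter, although both end with `u`.

Over any alphabet, if complete first returns to palindromes are palindromes, then a palindrome is
a complete first return to its longest proper palindromic suffix, so that privileged and
palindromic words coincide; and each appended letter creates exactly one new palindrome, so that
the word is rich.

Length `n + 1` is reached because privileged words and palindromes begin and end with the same
letter, so that a forbidden pair in them survives the removal of the first or of the last letter.
-/

section CompleteFirstReturn

variable {A : Type*} {u w : List A}

/-- The positions (from 0) at which `u` occurs in `w`, given by factorizations rather than by
`List.drop` and `List.take` as in `occCount`. -/
def occurrences (u w : List A) : Set ℕ :=
  {i | ∃ a b, w = a ++ u ++ b ∧ a.length = i}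

theorem occCount_eq_ncard_occurrences : occCount u w = (occurrences u w).ncard := by
  refine congrArg Set.ncard (Set.ext fun i => ⟨?_, ?_⟩)
  · rintro ⟨hi, htake⟩
    refine ⟨w.take i, (w.drop i).drop u.length, ?_, by simp; omega⟩
    conv_lhs => rw [← List.take_append_drop i w, ← List.take_append_drop u.length (w.drop i), htake]
    rw [List.append_assoc]
  · rintro ⟨a, b, rfl, rfl⟩
    exact ⟨by simp, by simp⟩

theorem occurrences_finite : (occurrences u w).Finite := by
  refine (Set.finite_Iic w.length).subset ?_
  rintro _ ⟨a, b, rfl, rfl⟩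
  simp only [Set.mem_Iic, List.length_append]
  omega

theorem pair_subset_occurrences (hpre : u <+: w) (hsuf : u <:+ w) :
    {0, w.length - u.length} ⊆ occurrences u w := by
  obtain ⟨t, ht⟩ := hpre
  obtain ⟨s, hs⟩ := hsuf
  rintro i (rfl | rfl)
  · exact ⟨[], t, by simp [ht], rfl⟩
  · exact ⟨s, [], by simp [hs], by simp [← hs]⟩

theorem occurrences_subset_pair_iff :
    occurrences u w ⊆ {0, w.length - u.length} ↔ ∀ a b, w = a ++ u ++ b → a = [] ∨ b = [] := by
  constructor
  · intro h a b hw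
    refine (h ⟨a, b, hw, rfl⟩).imp List.length_eq_zero_iff.1 fun hlen => ?_
    have := congrArg List.length hw
    simp only [List.length_append, Set.mem_singleton_iff] at this hlen
    exact List.length_eq_zero_iff.1 (by omega)
  · rintro h _ ⟨a, b, hw, rfl⟩
    rcases h a b hw with rfl | rfl
    · exact Or.inl rfl
    · exact Or.inr (by simp [hw])

theorem IsCompleteFirstReturn.length_lt (h : IsCompleteFirstReturn w u) :
    u.length < w.length := by
  obtain ⟨hpre, -, hocc⟩ := h
  refine hpre.length_le.lt_of_ne fun hlen => ?_
  have hzero : occurrences u w ⊆ {0} := by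
    rintro _ ⟨a, b, hw, rfl⟩
    have := congrArg List.length hw
    simp only [List.length_append] at this
    exact Set.mem_singleton_iff.2 (by omega)
  have := Set.ncard_le_ncard hzero
  rw [← occCount_eq_ncard_occurrences, hocc, Set.ncard_singleton] at this
  omega

theorem isCompleteFirstReturn_iff :
    IsCompleteFirstReturn w u ↔ u.length < w.length ∧ u <+: w ∧ u <:+ w ∧
      ∀ a b, w = a ++ u ++ b → a = [] ∨ b = [] := by
  have hpair (hlt : u.length < w.length) : ({0, w.length - u.length} : Set ℕ).ncard = 2 :=
    Set.ncard_pair (by omega)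
  constructor
  · intro h
    have ⟨hpre, hsuf, hocc⟩ := h
    refine ⟨h.length_lt, hpre, hsuf, occurrences_subset_pair_iff.1 ?_⟩
    refine (Set.eq_of_subset_of_ncard_le (pair_subset_occurrences hpre hsuf) ?_
      occurrences_finite).ge
    rw [← occCount_eq_ncard_occurrences, hocc, hpair h.length_lt]
  · rintro ⟨hlt, hpre, hsuf, hinner⟩
    refine ⟨hpre, hsuf, ?_⟩
    rw [occCount_eq_ncard_occurrences, ← hpair hlt]
    exact congrArg Set.ncard ((occurrences_subset_pair_iff.2 hinner).antisymm
      (pair_subset_occurrences hpre hsuf))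

theorem IsCompleteFirstReturn.eq_nil_or_eq_nil (h : IsCompleteFirstReturn w u) {a b : List A}
    (hw : w = a ++ u ++ b) : a = [] ∨ b = [] :=
  (isCompleteFirstReturn_iff.1 h).2.2.2 a b hw

theorem IsCompleteFirstReturn.length_eq_one (h : IsCompleteFirstReturn w []) :
    w.length = 1 := by
  match w, h.length_lt with
  | [_], _ => rfl
  | x :: y :: t, _ => simpa using h.eq_nil_or_eq_nil (a := [x]) (b := y :: t) rfl

theorem IsCompleteFirstReturn.reverse (h : IsCompleteFirstReturn w u) :
    IsCompleteFirstReturn w.reverse u.reverse := by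
  obtain ⟨hlt, hpre, hsuf, hinner⟩ := isCompleteFirstReturn_iff.1 h
  refine isCompleteFirstReturn_iff.2 ⟨by simpa using hlt, List.reverse_prefix.2 hsuf,
    List.reverse_suffix.2 hpre, fun a b hw => ?_⟩
  have hw' : w = b.reverse ++ u ++ a.reverse := by simpa using congrArg List.reverse hw
  simpa using (hinner _ _ hw').symm

theorem IsCompleteFirstReturn.prefix_eq (h : IsCompleteFirstReturn w u) {p : List A}
    (hp : p <+: w) (hu : u <:+ p) : p = u ∨ p = w := by
  obtain ⟨b, rfl⟩ := hp
  obtain ⟨a, rfl⟩ := hu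
  rcases h.eq_nil_or_eq_nil rfl with rfl | rfl
  · exact Or.inl rfl
  · exact Or.inr (List.append_nil _).symm

theorem exists_suffix_isCompleteFirstReturn {w : List A} (hlt : u.length < w.length)
    (hpre : u <+: w) (hsuf : u <:+ w) : ∃ v, v <:+ w ∧ IsCompleteFirstReturn v u := by
  by_cases hinner : ∀ a b, w = a ++ u ++ b → a = [] ∨ b = []
  · exact ⟨w, List.suffix_rfl, isCompleteFirstReturn_iff.2 ⟨hlt, hpre, hsuf, hinner⟩⟩
  · push Not at hinner
    obtain ⟨a, b, hw, ha, hb⟩ := hinner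
    have hub : u ++ b <:+ w := ⟨a, by rw [hw, List.append_assoc]⟩
    obtain ⟨v, hv, hret⟩ := exists_suffix_isCompleteFirstReturn (w := u ++ b)
      (by simpa using List.length_pos_iff.2 hb) (List.prefix_append u b)
      (List.suffix_of_suffix_length_le hsuf hub (by simp))
    exact ⟨v, hv.trans hub, hret⟩
termination_by w.length
decreasing_by simpa [hw] using List.length_pos_iff.2 ha

theorem IsCompleteFirstReturn.head?_eq_getLast? (h : IsCompleteFirstReturn w u)
    (hu : u.head? = u.getLast?) : w.head? = w.getLast? := by
  rcases List.eq_nil_or_concat u with rfl | ⟨v, a, rfl⟩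
  · obtain ⟨b, rfl⟩ := List.length_eq_one_iff.1 h.length_eq_one
    rfl
  · obtain ⟨⟨t, ht⟩, ⟨s, hs⟩, -⟩ := h
    rw [← ht, List.head?_append, hu, ht, ← hs, List.getLast?_append]
    simp

theorem exists_cons_append_singleton_of_border {c : A} {v : List A}
    (hlt : (c :: (v ++ [c])).length < w.length) (hpre : c :: (v ++ [c]) <+: w)
    (hsuf : c :: (v ++ [c]) <:+ w) :
    ∃ x, w = c :: (x ++ [c]) ∧ v.length < x.length ∧ v <+: x ∧ v <:+ x := by
  obtain ⟨_ | ⟨b, s⟩, rfl⟩ := hsuf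
  · simp at hlt
  · obtain ⟨rfl, hpre'⟩ := List.cons_prefix_cons.1 hpre
    refine ⟨s ++ c :: v, by simp, by simp; omega, ?_, ⟨s ++ [c], by simp⟩⟩
    have hv : v <+: s ++ c :: v ++ [c] := by
      simpa using (List.prefix_append v [c]).trans hpre'
    exact List.prefix_of_prefix_length_le hv (List.prefix_append _ [c]) (by simp; omega)

theorem Privileged.head?_eq_getLast? (h : Privileged w) : w.head? = w.getLast? := by
  induction h with
  | nil => rfl
  | single a => rfl
  | ret w u _ _ _ hret ih => exact hret.head?_eq_getLast? ih

theorem head?_eq_getLast?_of_reverse_eq (h : w.reverse = w) : w.head? = w.getLast? := by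
  rw [← List.head?_reverse, h]

end CompleteFirstReturn

section PalindromicReturns

variable {A : Type*} {w : List A}

/-- All complete first returns to palindromes among the factors of `w` are palindromes. For finite
words this property characterizes richness. -/
def PalindromicReturns (w : List A) : Prop :=
  ∀ u v : List A, u.reverse = u → v <:+: w → IsCompleteFirstReturn v u → v.reverse = v

theorem PalindromicReturns.of_infix {v : List A} (h : PalindromicReturns w) (hv : v <:+: w) :
    PalindromicReturns v :=
  fun u x hu hx => h u x hu (hx.trans hv)

theorem exists_longest_palindromic_suffix (w : List A) :
    ∃ q, q <:+ w ∧ q.reverse = q ∧ ∀ p, p <:+ w → p.reverse = p → p.length ≤ q.length := by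
  obtain ⟨q, ⟨hq, hpal⟩, hmax⟩ := Set.exists_max_image {q | q <:+ w ∧ q.reverse = q} List.length
    ((List.finite_toSet w.tails).subset fun q hq => (List.mem_tails q w).2 hq.1)
    ⟨[], List.nil_suffix, rfl⟩
  exact ⟨q, hq, hpal, fun p hp hpp => hmax p ⟨hp, hpp⟩⟩

theorem prefix_of_suffix_of_reverse_eq {u : List A} (hu : u.reverse = u) (hw : w.reverse = w)
    (h : u <:+ w) : u <+: w := by
  rwa [← List.reverse_prefix, hu, hw] at h

theorem PalindromicReturns.exists_longer_palindromic_suffix (h : PalindromicReturns w)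
    {u : List A} (hu : u.reverse = u) (hlt : u.length < w.length) (hpre : u <+: w)
    (hsuf : u <:+ w) : ∃ v, v <:+ w ∧ v.reverse = v ∧ IsCompleteFirstReturn v u := by
  obtain ⟨v, hv, hret⟩ := exists_suffix_isCompleteFirstReturn hlt hpre hsuf
  exact ⟨v, hv, h u v hu hv.isInfix hret, hret⟩

theorem Privileged.reverse_eq (hpriv : Privileged w) (h : PalindromicReturns w) :
    w.reverse = w := by
  induction hpriv with
  | nil => rfl
  | single a => rfl
  | ret w u _ _ _ hret ih =>
    exact h u w (ih (h.of_infix hret.1.isInfix)) List.infix_rfl hret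

theorem PalindromicReturns.privileged {w : List A} (h : PalindromicReturns w)
    (hpal : w.reverse = w) : Privileged w := by
  match w with
  | [] => exact .nil
  | [a] => exact .single a
  | a :: b :: t =>
    obtain ⟨q, hq, hqpal, hmax⟩ := exists_longest_palindromic_suffix (b :: t)
    have hqw : q <:+ a :: b :: t := hq.trans (List.suffix_cons a _)
    have hlt : q.length < (a :: b :: t).length := Nat.lt_succ_of_le hq.length_le
    obtain ⟨v, hv, hvpal, hret⟩ := h.exists_longer_palindromic_suffix hqpal hlt
      (prefix_of_suffix_of_reverse_eq hqpal hpal hqw) hqw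
    rcases List.suffix_cons_iff.1 hv with rfl | hv
    · exact .ret _ q (by simp) hlt ((h.of_infix hqw.isInfix).privileged hqpal) hret
    · exact absurd (hmax v hv hvpal) hret.length_lt.not_ge
termination_by w.length
decreasing_by exact hlt

/-- The palindromic factors of `w`, the set counted in `RichWord`. -/
def palFactors (w : List A) : Set (List A) :=
  {u | u <:+: w ∧ u.reverse = u}

theorem palFactors_finite (w : List A) : (palFactors w).Finite :=
  (List.finite_toSet w.sublists).subset fun _ hu => List.mem_sublists.2 hu.1.sublist

theorem palFactors_append_singleton {a : A} {q : List A} (hq : q <:+ w ++ [a])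
    (hqpal : q.reverse = q)
    (hmax : ∀ p, p <:+ w ++ [a] → p.reverse = p → p.length ≤ q.length) :
    palFactors (w ++ [a]) = insert q (palFactors w) := by
  ext p
  constructor
  · rintro ⟨hp, hppal⟩
    rcases List.infix_concat_iff.1 hp with hp | hp
    · have hpq : p <:+ q := List.suffix_of_suffix_length_le hp hq (hmax p hp hppal)
      obtain ⟨t, rfl⟩ := prefix_of_suffix_of_reverse_eq hppal hqpal hpq
      rcases List.eq_nil_or_concat t with rfl | ⟨t, b, rfl⟩
      · exact Or.inl (List.append_nil p).symm
      · obtain ⟨s, hs⟩ := hq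
        have hw : s ++ p ++ t = w := by
          rw [List.concat_eq_append, ← List.append_assoc, ← List.append_assoc] at hs
          exact (List.append_inj' hs rfl).1
        exact Or.inr ⟨⟨s, t, hw⟩, hppal⟩
    · exact Or.inr ⟨hp, hppal⟩
  · rintro (rfl | ⟨hp, hppal⟩)
    · exact ⟨hq.isInfix, hqpal⟩
    · exact ⟨hp.trans (List.prefix_append w [a]).isInfix, hppal⟩

theorem PalindromicReturns.richWord (h : PalindromicReturns w) : RichWord w := by
  induction w using List.reverseRecOn with
  | nil =>
    have : palFactors ([] : List A) = {[]} := by ext u; simp +contextual [palFactors]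
    exact (congrArg Set.ncard this).trans (Set.ncard_singleton _)
  | append_singleton w a ih =>
    obtain ⟨q, hq, hqpal, hmax⟩ := exists_longest_palindromic_suffix (w ++ [a])
    have hnew : q ∉ palFactors w := by
      rintro ⟨⟨s, t, rfl⟩, -⟩
      have hx : q ++ (t ++ [a]) <:+ s ++ q ++ t ++ [a] := ⟨s, by simp⟩
      obtain ⟨v, hv, hvpal, hret⟩ := (h.of_infix hx.isInfix).exists_longer_palindromic_suffix hqpal
        (by simp) (List.prefix_append q _) (List.suffix_of_suffix_length_le hq hx (by simp))
      exact absurd (hmax v (hv.trans hx) hvpal) hret.length_lt.not_ge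
    have hw : (palFactors w).ncard = w.length + 1 :=
      ih (h.of_infix (List.prefix_append w [a]).isInfix)
    change (palFactors (w ++ [a])).ncard = _
    rw [palFactors_append_singleton hq hqpal hmax,
      Set.ncard_insert_of_notMem hnew (palFactors_finite w), hw, List.length_append,
      List.length_singleton]

end PalindromicReturns

section UnbalancedPairs

variable {A : Type*} {w : List A}

/-- There are no two factors `c x c` and `d y d` of `w` with `c ≠ d` and `x`, `y` equal up to
order. In a binary word such a pair violates balance; letting `x` be permuted rather than only
equal makes the notion invariant under reversing one of the two factors. -/
def UnbalancedPairFree (w : List A) : Prop :=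
  ∀ (c d : A) (x y : List A), x.Perm y →
    c :: (x ++ [c]) <:+: w → d :: (y ++ [d]) <:+: w → c = d

theorem UnbalancedPairFree.of_infix {v : List A} (h : UnbalancedPairFree w) (hv : v <:+: w) :
    UnbalancedPairFree v :=
  fun c d x y hxy hc hd => h c d x y hxy (hc.trans hv) (hd.trans hv)

theorem BalancedWord.unbalancedPairFree {w : List Bool} (h : BalancedWord w) :
    UnbalancedPairFree w := by
  intro c d x y hxy hc hd
  have hdiff := h _ _ hc hd (by simp [hxy.length_eq])
  simp only [List.count_cons, List.count_append, List.count_nil, hxy.count_eq true] at hdiff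
  cases c <;> cases d <;> grind

theorem infix_tail_or_prefix {x : List A} (h : x <:+: w) : x <:+: w.tail ∨ x <+: w := by
  cases w with
  | nil => exact Or.inl h
  | cons a t => exact (List.infix_cons_iff.1 h).symm

theorem infix_dropLast_or_suffix {x : List A} (h : x <:+: w) :
    x <:+: w.dropLast ∨ x <:+ w := by
  rcases List.eq_nil_or_concat w with rfl | ⟨t, a, rfl⟩
  · exact Or.inl h
  · simpa using (List.infix_concat_iff.1 (by simpa using h)).symm

theorem UnbalancedPairFree.of_tail_of_dropLast (hends : w.head? = w.getLast?)
    (htail : UnbalancedPairFree w.tail) (hdrop : UnbalancedPairFree w.dropLast) :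
    UnbalancedPairFree w := by
  have eq_of_suffix_of_prefix {c d : A} {x y : List A} (hc : c :: (x ++ [c]) <:+ w)
      (hd : d :: (y ++ [d]) <+: w) : c = d := by
    have hlast : w.getLast? = some c := by
      obtain ⟨s, rfl⟩ := hc
      rw [← List.cons_append, ← List.append_assoc, List.getLast?_concat]
    have hhead : w.head? = some d := by
      obtain ⟨t, rfl⟩ := hd
      rfl
    exact Option.some_injective _ (hlast.symm.trans (hends.symm.trans hhead))
  have eq_of_tail_of_prefix {c d : A} {x y : List A} (hxy : x.Perm y)
      (hc : c :: (x ++ [c]) <:+: w.tail) (hd : d :: (y ++ [d]) <+: w) : c = d := by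
    rcases infix_dropLast_or_suffix (hc.trans (List.tail_suffix w).isInfix) with hc' | hc'
    · refine hdrop c d x y hxy hc' (List.IsPrefix.isInfix ?_)
      refine List.prefix_of_prefix_length_le hd (List.dropLast_prefix w) ?_
      simpa [hxy.length_eq] using hc'.length_le
    · exact eq_of_suffix_of_prefix hc' hd
  intro c d x y hxy hc hd
  rcases infix_tail_or_prefix hc with hc | hc <;> rcases infix_tail_or_prefix hd with hd | hd
  · exact htail c d x y hxy hc hd
  · exact eq_of_tail_of_prefix hxy hc hd
  · exact (eq_of_tail_of_prefix hxy.symm hd hc).symm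
  · have hlen : (c :: (x ++ [c])).length = (d :: (y ++ [d])).length := by simp [hxy.length_eq]
    exact List.head_eq_of_cons_eq
      ((List.prefix_of_prefix_length_le hc hd hlen.le).eq_of_length hlen)

/-- `x` is a factor of `w` or of its reversal: the closure of the factors of `w` under reversal. -/
def SymFactor (w x : List A) : Prop :=
  x <:+: w ∨ x <:+: w.reverse

theorem SymFactor.of_infix {x y : List A} (hx : SymFactor w x) (hy : y <:+: x) : SymFactor w y :=
  hx.imp hy.trans hy.trans

theorem SymFactor.reverse {x : List A} (hx : SymFactor w x) : SymFactor w x.reverse :=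
  hx.symm.imp (fun h => by simpa using List.reverse_infix.2 h) List.reverse_infix.2

theorem SymFactor.exists_perm_infix {c : A} {x : List A} (h : SymFactor w (c :: (x ++ [c]))) :
    ∃ y, y.Perm x ∧ c :: (y ++ [c]) <:+: w := by
  rcases h with h | h
  · exact ⟨x, .rfl, h⟩
  · exact ⟨x.reverse, x.reverse_perm, by simpa using List.reverse_infix.2 h⟩

theorem UnbalancedPairFree.eq_of_symFactor (h : UnbalancedPairFree w) {c d : A} {x : List A}
    (hc : SymFactor w (c :: (x ++ [c]))) (hd : SymFactor w (d :: (x ++ [d]))) : c = d := by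
  obtain ⟨y, hy, hc⟩ := hc.exists_perm_infix
  obtain ⟨z, hz, hd⟩ := hd.exists_perm_infix
  exact h c d y z (hy.trans hz.symm) hc hd

theorem exists_fork_of_not_prefix {x y : List A} (hxy : ¬ x <+: y) (hyx : ¬ y <+: x) :
    ∃ r a b, a ≠ b ∧ r ++ [a] <+: x ∧ r ++ [b] <+: y := by
  induction x generalizing y with
  | nil => exact absurd List.nil_prefix hxy
  | cons a x ih =>
    cases y with
    | nil => exact absurd List.nil_prefix hyx
    | cons b y =>
      by_cases hab : a = b
      · subst hab
        simp only [List.prefix_cons_inj] at hxy hyx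
        obtain ⟨r, c, d, hcd, hc, hd⟩ := ih hxy hyx
        exact ⟨a :: r, c, d, hcd, (List.prefix_cons_inj a).2 hc, (List.prefix_cons_inj a).2 hd⟩
      · exact ⟨[], a, b, hab, by simp, by simp⟩

theorem exists_fork_of_not_suffix {x y : List A} (hxy : ¬ x <:+ y) (hyx : ¬ y <:+ x) :
    ∃ z a b, a ≠ b ∧ a :: z <:+ x ∧ b :: z <:+ y := by
  rw [← List.reverse_prefix] at hxy hyx
  obtain ⟨r, a, b, hab, ha, hb⟩ := exists_fork_of_not_prefix hxy hyx
  exact ⟨r.reverse, a, b, hab, by simpa using List.reverse_suffix.2 ha,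
    by simpa using List.reverse_suffix.2 hb⟩

end UnbalancedPairs

section BinaryReturns

variable {w r u : List Bool}

/-- `x` is right special in the set of factors of `w` and of `w.reverse`. The alphabet being binary,
this is stated as every letter extending `x` to the right. -/
def SymRightSpecial (w x : List Bool) : Prop :=
  ∀ a, SymFactor w (x ++ [a])

theorem UnbalancedPairFree.suffix_of_symRightSpecial (h : UnbalancedPairFree w) {x y : List Bool}
    (hx : SymRightSpecial w x) (hy : SymRightSpecial w y) (hlen : x.length ≤ y.length) :
    x <:+ y := by
  by_contra hxy
  have hyx : ¬ y <:+ x := fun hyx =>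
    hxy (hyx.eq_of_length (hyx.length_le.antisymm hlen) ▸ List.suffix_rfl)
  obtain ⟨z, a, b, hab, ha, hb⟩ := exists_fork_of_not_suffix hxy hyx
  have extend {e : Bool} {v : List Bool} (hv : SymRightSpecial w v) (he : e :: z <:+ v) :
      SymFactor w (e :: (z ++ [e])) :=
    (hv e).of_infix (List.suffix_append_self_iff.2 he).isInfix
  exact hab (h.eq_of_symFactor (extend hx ha) (extend hy hb))

/-- `r` is the longest common prefix of `w` and `w.reverse`, and these are distinct. As the two
words have the same length, this means that each of the two letters continues `r` in one of them. -/
def IsReversalFork (w r : List Bool) : Prop :=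
  ∀ a, r ++ [a] <+: w ∨ r ++ [a] <+: w.reverse

theorem exists_isReversalFork (h : w.reverse ≠ w) : ∃ r, IsReversalFork w r := by
  have hlen : w.reverse.length = w.length := List.length_reverse
  obtain ⟨r, a, b, hab, ha, hb⟩ := exists_fork_of_not_prefix
    (fun hp => h (hp.eq_of_length hlen.symm).symm) (fun hp => h (hp.eq_of_length hlen))
  refine ⟨r, fun c => ?_⟩
  rcases Bool.eq_or_eq_not c a with rfl | rfl
  · exact Or.inl ha
  · exact Or.inr (Bool.eq_not_of_ne hab.symm ▸ hb)

theorem IsReversalFork.symRightSpecial (hr : IsReversalFork w r) : SymRightSpecial w r :=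
  fun a => (hr a).imp List.IsPrefix.isInfix List.IsPrefix.isInfix

theorem IsReversalFork.reverse (hr : IsReversalFork w r) : IsReversalFork w.reverse r :=
  fun a => by simpa using (hr a).symm

theorem IsReversalFork.prefix_of_palindromic_border (hr : IsReversalFork w r)
    (hu : u.reverse = u) (hpre : u <+: w) (hsuf : u <:+ w) : u <+: r := by
  have hpre' : u <+: w.reverse := hu ▸ List.reverse_prefix.2 hsuf
  have hcomp (a : Bool) : u <+: r ++ [a] ∨ r ++ [a] <+: u :=
    (hr a).elim (List.prefix_or_prefix_of_prefix hpre) (List.prefix_or_prefix_of_prefix hpre')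
  by_contra hur
  have hru (a : Bool) : r ++ [a] <+: u := by
    refine (hcomp a).elim (fun h => ?_) id
    exact (List.prefix_concat_iff.1 h).resolve_right hur ▸ List.prefix_rfl
  have heq : r ++ [true] = r ++ [false] :=
    (List.prefix_of_prefix_length_le (hru true) (hru false) (by simp)).eq_of_length (by simp)
  simp at heq

/-- A prefix of `w` ending with `u` is `u` or `w` itself; the former is too short, and the latter
leaves `w.reverse` with a last letter other than that of `w`. -/
theorem IsReversalFork.not_suffix_append_singleton (hr : IsReversalFork w r)
    (hret : IsCompleteFirstReturn w u) (hu : u.reverse = u) (a : Bool) : ¬ u <:+ r ++ [a] := by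
  intro hsuf
  wlog ha : r ++ [a] <+: w generalizing w with of_prefix
  · exact of_prefix hr.reverse (hu ▸ hret.reverse) ((hr a).resolve_left ha)
  rcases hret.prefix_eq ha hsuf with h | h
  · have := (hr.prefix_of_palindromic_border hu hret.1 hret.2.1).length_le
    simp [← h] at this
  · have hends := hret.head?_eq_getLast? (head?_eq_getLast?_of_reverse_eq hu)
    rcases hr !a with hb | hb
    · have := hb.eq_of_length (by simp [← h])
      simp [← h] at this
    · have := hb.eq_of_length (by simp [← h])
      rw [← List.getLast?_reverse, ← this, ← h] at hends
      simp at hends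

theorem UnbalancedPairFree.reverse_eq_of_border_symRightSpecial (h : UnbalancedPairFree w)
    {c : Bool} {v : List Bool} (hv : v.reverse = v) (hspecial : SymRightSpecial w v)
    (hret : IsCompleteFirstReturn w (c :: (v ++ [c]))) : w.reverse = w := by
  have hu : (c :: (v ++ [c])).reverse = c :: (v ++ [c]) := by simp [hv]
  by_contra hw
  obtain ⟨r, hr⟩ := exists_isReversalFork hw
  have hlen := (hr.prefix_of_palindromic_border hu hret.1 hret.2.1).length_le
  simp only [List.length_cons, List.length_append, List.length_nil] at hlen
  obtain ⟨s, rfl⟩ := h.suffix_of_symRightSpecial hspecial hr.symRightSpecial (by omega)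
  obtain rfl | ⟨s, e, rfl⟩ := List.eq_nil_or_concat s
  · simp at hlen
  · have hsuf (a : Bool) : e :: (v ++ [a]) <:+ s.concat e ++ v ++ [a] := ⟨s, by simp⟩
    obtain rfl : c = e := h.eq_of_symFactor (Or.inl hret.1.isInfix)
      ((hr.symRightSpecial e).of_infix (hsuf e).isInfix)
    exact hr.not_suffix_append_singleton hret hu c (hsuf c)

theorem IsCompleteFirstReturn.of_not_symRightSpecial {c : Bool} {v x : List Bool}
    (hv : v.reverse = v) (hspecial : ¬ SymRightSpecial (c :: (x ++ [c])) v)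
    (hret : IsCompleteFirstReturn (c :: (x ++ [c])) (c :: (v ++ [c])))
    (hlt : v.length < x.length) (hpre : v <+: x) (hsuf : v <:+ x) :
    IsCompleteFirstReturn x v := by
  set w := c :: (x ++ [c]) with hw
  have eq_of_right {e : Bool} (he : SymFactor w (v ++ [e])) : e = c := by
    have hc : SymFactor w (v ++ [c]) :=
      Or.inl ((List.suffix_cons c _).isInfix.trans hret.1.isInfix)
    by_contra hec
    refine hspecial fun a => ?_
    rcases Bool.eq_or_eq_not a c with rfl | rfl
    · exact hc
    · exact Bool.eq_not_of_ne hec ▸ he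
  have eq_of_left {e : Bool} (he : SymFactor w (e :: v)) : e = c :=
    eq_of_right (by simpa [hv] using he.reverse)
  refine isCompleteFirstReturn_iff.2 ⟨hlt, hpre, hsuf, fun a b hx => ?_⟩
  by_contra! hab
  obtain ⟨a, e, rfl⟩ := (List.eq_nil_or_concat a).resolve_left hab.1
  obtain ⟨f, b, rfl⟩ := List.exists_cons_of_ne_nil hab.2
  obtain rfl : e = c := eq_of_left (Or.inl ⟨c :: a, f :: b ++ [c], by simp [hw, hx]⟩)
  obtain rfl : f = e := eq_of_right (Or.inl ⟨e :: (a ++ [e]), b ++ [e], by simp [hw, hx]⟩)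
  have := hret.eq_nil_or_eq_nil (a := f :: a) (b := b ++ [f]) (by simp [hw, hx])
  simp at this

theorem UnbalancedPairFree.reverse_eq_of_isCompleteFirstReturn (hu : u.Palindrome)
    (h : UnbalancedPairFree w) (hret : IsCompleteFirstReturn w u) : w.reverse = w := by
  induction hu generalizing w with
  | nil =>
    by_contra hw
    obtain ⟨r, hr⟩ := exists_isReversalFork hw
    exact hr.not_suffix_append_singleton hret rfl true List.nil_suffix
  | singleton c =>
    by_contra hw
    obtain ⟨r, hr⟩ := exists_isReversalFork hw
    exact hr.not_suffix_append_singleton hret rfl c (List.suffix_append r [c])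
  | @cons_concat c v hv ih =>
    by_cases hspecial : SymRightSpecial w v
    · exact h.reverse_eq_of_border_symRightSpecial hv.reverse_eq hspecial hret
    · obtain ⟨x, rfl, hlt, hpre, hsuf⟩ :=
        exists_cons_append_singleton_of_border hret.length_lt hret.1 hret.2.1
      have hx : x <:+: c :: (x ++ [c]) := ⟨[c], [c], by simp⟩
      have hxret := IsCompleteFirstReturn.of_not_symRightSpecial hv.reverse_eq hspecial hret
        hlt hpre hsuf
      simp [ih (h.of_infix hx) hxret]

theorem UnbalancedPairFree.palindromicReturns (h : UnbalancedPairFree w) :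
    PalindromicReturns w :=
  fun _ _ hu hv hret =>
    (h.of_infix hv).reverse_eq_of_isCompleteFirstReturn (.of_reverse_eq hu) hret

end BinaryReturns

section InfiniteWords

theorem IsFactorInf.of_infix {A : Type*} {w : ℕ → A} {x y : List A} (hx : IsFactorInf w x)
    (hy : y <:+: x) : IsFactorInf w y := by
  obtain ⟨i, hi⟩ := hx
  obtain ⟨s, t, rfl⟩ := hy
  refine ⟨i + s.length, List.ext_getElem (by simp) fun k hk _ => ?_⟩
  have := List.getElem_of_eq hi (i := s.length + k) (by simp; omega)
  simpa [List.getElem_append, hk, add_assoc] using this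

theorem IsFactorInf.unbalancedPairFree {w : ℕ → Bool} {n : ℕ}
    (hbal : ∀ m : ℕ, m ≤ n → ∀ x : List Bool, IsFactorInf w x → x.length = m → BalancedWord x)
    {u : List Bool} (hu : IsFactorInf w u) (hlen : u.length ≤ n + 1)
    (hends : u.head? = u.getLast?) : UnbalancedPairFree u := by
  refine .of_tail_of_dropLast hends ?_ ?_
  · exact (hbal u.tail.length (by simp; omega) _
      (hu.of_infix u.tail_suffix.isInfix) rfl).unbalancedPairFree
  · exact (hbal u.dropLast.length (by simp; omega) _
      (hu.of_infix u.dropLast_prefix.isInfix) rfl).unbalancedPairFree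

end InfiniteWords

/-- If all factors of an infinite binary word `w` of length at most `n` are
balanced, then for every `m ≤ n + 1` the set of privileged factors of `w` of length `m`
equals the set of palindromic factors of `w` of length `m`.  In particular, every
infinite balanced binary word is rich. -/
theorem balanced_implies_priv_eq_pal_and_rich (w : ℕ → Bool) (n : ℕ)
    (hbal : ∀ m : ℕ, m ≤ n → ∀ x : List Bool, IsFactorInf w x → x.length = m →
      BalancedWord x) :
    (∀ m : ℕ, m ≤ n + 1 →
      {u : List Bool | IsFactorInf w u ∧ Privileged u ∧ u.length = m} =
        {u : List Bool | IsFactorInf w u ∧ u.reverse = u ∧ u.length = m}) ∧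
    (∀ v : ℕ → Bool,
      (∀ x y : List Bool, IsFactorInf v x → IsFactorInf v y → x.length = y.length →
        ((x.count true : ℤ) - (y.count true : ℤ)).natAbs ≤ 1) →
      ∀ x : List Bool, IsFactorInf v x → RichWord x) := by
  refine ⟨fun m hm => Set.ext fun u => and_congr_right fun hu => and_congr_left fun hlen => ?_,
    fun v hv x hx => ?_⟩
  · have hret (hends : u.head? = u.getLast?) : PalindromicReturns u :=
      (hu.unbalancedPairFree hbal (hlen ▸ hm) hends).palindromicReturns
    exact ⟨fun hpriv => hpriv.reverse_eq (hret hpriv.head?_eq_getLast?),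
      fun hpal => (hret (head?_eq_getLast?_of_reverse_eq hpal)).privileged hpal⟩
  · have hbal : BalancedWord x := fun y z hy hz => hv y z (hx.of_infix hy) (hx.of_infix hz)
    exact hbal.unbalancedPairFree.palindromicReturns.richWord
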